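/- Suppose [p_1,q_1] and [p_2,q_2] are two excursions of Ȳ contained in [τ_l, τ_{l+1}] for some l ≥ 0, with q_1 < p_2. Then S_k ≠ 0 for every k with τ_l < k ≤ p_2, and S_{p_2 + 1} = 0; that is, the first zero of S after τ_l is p_2 + 1. -/

import Mathlib

noncomputable section

/-- The walk `S` associated with the sign sequence `X : {1,2,…} → {−1,1}`:
`S 0 = 0`, `S n = X 1 + ⋯ + X n`. -/
def cvWalk (X : ℕ → ℤ) (n : ℕ) : ℤ := ∑ j ∈ Finset.Icc 1 n, X j

/-- The crossing times of `S`: `τ 0 = 0` and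
`τ (l+1) = min {i > τ l : S (i-1) * S (i+1) < 0}`. -/
def cvTau (X : ℕ → ℤ) : ℕ → ℕ
  | 0 => 0
  | l + 1 => sInf {i : ℕ | cvTau X l < i ∧ cvWalk X (i - 1) * cvWalk X (i + 1) < 0}

/-- The increments of the Csaki–Vincze transform `S̄ = T(S)`:
`X̄ j = Σ_{l ≥ 0} (−1)^(l+1) · X 1 · X (j+1) · 1_{τ l + 1 ≤ j ≤ τ (l+1)}`
(the sum may be truncated to `l ≤ j` since `l ≤ τ l` whenever `τ l + 1 ≤ j`). -/
def cvXbar (X : ℕ → ℤ) (j : ℕ) : ℤ :=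
  ∑ l ∈ Finset.range (j + 1),
    (-1 : ℤ) ^ (l + 1) * X 1 * X (j + 1) *
      (if cvTau X l + 1 ≤ j ∧ j ≤ cvTau X (l + 1) then 1 else 0)

/-- The Csaki–Vincze transform `S̄ = T(S)`. -/
def cvSbar (X : ℕ → ℤ) (n : ℕ) : ℤ := ∑ j ∈ Finset.Icc 1 n, cvXbar X j

/-- `Ȳ`-type process of a walk `f`: `max_{0 ≤ k ≤ n} f k − f n`. -/
def cvYof (f : ℕ → ℤ) (n : ℕ) : ℤ :=
  (Finset.range (n + 1)).sup' Finset.nonempty_range_add_one f - f n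

/-- `Ȳ n = max_{0 ≤ k ≤ n} S̄ k − S̄ n`. -/
def cvYbar (X : ℕ → ℤ) (n : ℕ) : ℤ := cvYof (cvSbar X) n

/-- `[p, q]` is an excursion of `Ȳ`: `Ȳ p = Ȳ (p−1) = Ȳ q = Ȳ (q+1) = 0`
(with the convention `Ȳ (−1) = 0`, which is handled by truncated subtraction since
`Ȳ 0 = 0` anyway) and for every `p ≤ j < q`, `Ȳ j = 0` implies `Ȳ (j+1) = 1`. -/
def cvIsExcursion (X : ℕ → ℤ) (p q : ℕ) : Prop :=
  p < q ∧ cvYbar X p = 0 ∧ cvYbar X (p - 1) = 0 ∧ cvYbar X q = 0 ∧ cvYbar X (q + 1) = 0 ∧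
    ∀ j, p ≤ j → j < q → cvYbar X j = 0 → cvYbar X (j + 1) = 1

/-!
On `[τ l, τ (l + 1)]` the transform is a reflected shift of `S`: with `ε = (-1) ^ l * X 1` one has
`S̄ n = S̄ (τ l) + 1 - ε * S (n + 1)`, and `ε * S ≥ 0` there because `S` does not change sign
between crossings. So `Ȳ n = 0` forces `ε * S (n + 1)` to be the minimum of `ε * S` over
`(τ l, n + 1]`, and this minimum is at most `1` since `ε * S (τ l + 1) = 1`. If `Ȳ` vanishes at both
`n` and `n + 1`, the minimum drops strictly at the last step while staying nonnegative, so it goes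
from `1` to `0`.
-/

/-- A nearest-neighbour path on `ℤ`: consecutive values differ by exactly one. -/
def IsNearestNeighbour (f : ℕ → ℤ) : Prop := ∀ n, |f (n + 1) - f n| = 1

namespace IsNearestNeighbour

variable {f : ℕ → ℤ}

theorem succ_eq_or (hf : IsNearestNeighbour f) (n : ℕ) :
    f (n + 1) = f n + 1 ∨ f (n + 1) = f n - 1 := by
  have := (abs_eq zero_le_one).mp (hf n)
  omega

theorem succ_ne (hf : IsNearestNeighbour f) (n : ℕ) : f (n + 1) ≠ f n := by
  have := hf.succ_eq_or n
  omega

theorem const_mul (hf : IsNearestNeighbour f) {ε : ℤ} (hε : |ε| = 1) :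
    IsNearestNeighbour fun n ↦ ε * f n := fun n ↦ by
  rw [← mul_sub, abs_mul, hε, hf n, one_mul]

theorem nonneg_of_no_crossing (hf : IsNearestNeighbour f) {a b : ℕ} (ha : 0 ≤ f a)
    (ha' : 0 ≤ f (a + 1)) (hab : ∀ i, a ≤ i → i + 1 < b → 0 ≤ f i * f (i + 2)) {n : ℕ}
    (han : a ≤ n) (hnb : n ≤ b) : 0 ≤ f n := by
  suffices consecutive : ∀ m, a ≤ m → m < b → 0 ≤ f m ∧ 0 ≤ f (m + 1) by
    obtain rfl | han := han.eq_or_lt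
    · exact ha
    · obtain ⟨m, rfl⟩ := Nat.exists_eq_add_one_of_ne_zero (by omega : n ≠ 0)
      exact (consecutive m (by omega) (by omega)).2
  intro m ham
  induction m, ham using Nat.le_induction with
  | base => exact fun _ ↦ ⟨ha, ha'⟩
  | succ m ham ih =>
    intro hmb
    obtain ⟨hm, hm'⟩ := ih (by omega)
    refine ⟨hm', ?_⟩
    have hstep := hf.succ_eq_or m
    have hstep' := hf.succ_eq_or (m + 1)
    obtain hpos | hzero := hm'.lt_or_eq
    · omega
    · have hone : f m = 1 := by omega
      simpa only [hone, one_mul] using hab m ham hmb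

theorem eq_of_crossing (hf : IsNearestNeighbour f) {i : ℕ} (hi : 0 ≤ f i)
    (hcross : f i * f (i + 2) < 0) : f (i + 1) = 0 ∧ f (i + 2) = -1 := by
  have hneg : f (i + 2) < 0 := neg_of_mul_neg_right hcross hi
  have hne : f i ≠ 0 := left_ne_zero_of_mul hcross.ne
  have hstep := hf.succ_eq_or i
  have hstep' : f (i + 2) = f (i + 1) + 1 ∨ f (i + 2) = f (i + 1) - 1 := hf.succ_eq_or (i + 1)
  omega

end IsNearestNeighbour

theorem cvWalk_succ (X : ℕ → ℤ) (n : ℕ) : cvWalk X (n + 1) = cvWalk X n + X (n + 1) :=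
  Finset.sum_Icc_succ_top (by omega) X

theorem cvSbar_succ (X : ℕ → ℤ) (n : ℕ) : cvSbar X (n + 1) = cvSbar X n + cvXbar X (n + 1) :=
  Finset.sum_Icc_succ_top (by omega) (cvXbar X)

theorem cvYof_eq_zero_iff {f : ℕ → ℤ} {n : ℕ} : cvYof f n = 0 ↔ ∀ k ≤ n, f k ≤ f n := by
  have hle : f n ≤ (Finset.range (n + 1)).sup' Finset.nonempty_range_add_one f :=
    Finset.le_sup' f (Finset.self_mem_range_succ n)
  rw [cvYof, sub_eq_zero, ← hle.ge_iff_eq', Finset.sup'_le_iff]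
  simp only [Finset.mem_range, Nat.lt_succ_iff]

theorem isNearestNeighbour_cvWalk {X : ℕ → ℤ} (hX : ∀ j, 1 ≤ j → X j = 1 ∨ X j = -1) :
    IsNearestNeighbour (cvWalk X) := fun n ↦ by
  rw [cvWalk_succ, add_sub_cancel_left, abs_eq zero_le_one]
  exact hX (n + 1) n.succ_pos

/-- The sign `(-1) ^ l * X 1` of the first step of `S` after the crossing time `τ l`. The walk keeps
this sign, in the weak sense, on `[τ l, τ (l + 1)]`. -/
def cvSign (X : ℕ → ℤ) (l : ℕ) : ℤ := (-1) ^ l * X 1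

theorem cvSign_succ (X : ℕ → ℤ) (l : ℕ) : cvSign X (l + 1) = -cvSign X l := by
  simp only [cvSign, pow_succ]
  ring

theorem abs_cvSign {X : ℕ → ℤ} (hX : X 1 = 1 ∨ X 1 = -1) (l : ℕ) : |cvSign X l| = 1 := by
  rw [cvSign, abs_mul, abs_neg_one_pow, one_mul, abs_eq zero_le_one]
  exact hX

theorem cvSign_mul_self {X : ℕ → ℤ} (hX : X 1 = 1 ∨ X 1 = -1) (l : ℕ) :
    cvSign X l * cvSign X l = 1 := by
  rw [← abs_mul_abs_self, abs_cvSign hX, one_mul]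

theorem cvWalk_mul_nonneg_of_lt_cvTau_succ {X : ℕ → ℤ} {l n : ℕ} (hl : cvTau X l ≤ n)
    (hn : n + 1 < cvTau X (l + 1)) : 0 ≤ cvWalk X n * cvWalk X (n + 2) := by
  rw [cvTau] at hn
  by_contra! hcross
  exact Nat.notMem_of_lt_sInf hn ⟨Nat.lt_succ_of_le hl, hcross⟩

section InfinitelyManyCrossings

variable {X : ℕ → ℤ}
  (hinf : {i : ℕ | 1 ≤ i ∧ cvWalk X (i - 1) * cvWalk X (i + 1) < 0}.Infinite)
include hinf

theorem exists_cvTau_succ_eq (l : ℕ) :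
    ∃ n, cvTau X (l + 1) = n + 1 ∧ cvTau X l ≤ n ∧ cvWalk X n * cvWalk X (n + 2) < 0 := by
  have hne : {i | cvTau X l < i ∧ cvWalk X (i - 1) * cvWalk X (i + 1) < 0}.Nonempty :=
    let ⟨i, hi, hlt⟩ := hinf.exists_gt (cvTau X l)
    ⟨i, hlt, hi.2⟩
  obtain ⟨hlt, hcross⟩ : cvTau X l < cvTau X (l + 1) ∧
      cvWalk X (cvTau X (l + 1) - 1) * cvWalk X (cvTau X (l + 1) + 1) < 0 := Nat.sInf_mem hne
  obtain ⟨n, hn⟩ := Nat.exists_eq_add_one_of_ne_zero hlt.ne_bot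
  rw [hn] at hlt hcross
  exact ⟨n, hn, Nat.le_of_lt_succ hlt, hcross⟩

theorem strictMono_cvTau : StrictMono (cvTau X) := strictMono_nat_of_lt_succ fun l ↦ by
  obtain ⟨n, hn, hle, -⟩ := exists_cvTau_succ_eq hinf l
  omega

theorem cvXbar_eq {l j : ℕ} (hl : cvTau X l < j) (hj : j ≤ cvTau X (l + 1)) :
    cvXbar X j = -cvSign X l * X (j + 1) := by
  have hmono := strictMono_cvTau hinf
  have hl_mem : l ∈ Finset.range (j + 1) :=
    Finset.mem_range.mpr ((hmono.le_apply.trans hl.le).trans_lt j.lt_succ_self)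
  rw [cvXbar, Finset.sum_eq_single_of_mem l hl_mem, if_pos ⟨hl, hj⟩, mul_one, ← cvSign_succ, cvSign]
  intro m _ hml
  rw [if_neg, mul_zero]
  rintro ⟨hm, hm'⟩
  have hml_succ : m < l + 1 := hmono.lt_iff_lt.mp (Nat.lt_of_succ_le hm |>.trans_le hj)
  have hlm_succ : l < m + 1 := hmono.lt_iff_lt.mp (hl.trans_le hm')
  omega

theorem cvSbar_eq_sub {l n : ℕ} (hl : cvTau X l ≤ n) (hn : n ≤ cvTau X (l + 1)) :
    cvSbar X n =
      cvSbar X (cvTau X l) - cvSign X l * (cvWalk X (n + 1) - cvWalk X (cvTau X l + 1)) := by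
  induction n, hl using Nat.le_induction with
  | base => ring
  | succ n hl ih =>
    rw [cvSbar_succ, ih (by omega), cvXbar_eq hinf (Nat.lt_succ_of_le hl) hn, cvWalk_succ X (n + 1)]
    ring

end InfinitelyManyCrossings

section Signs

variable {X : ℕ → ℤ} (hX : ∀ j, 1 ≤ j → X j = 1 ∨ X j = -1)
include hX

theorem isNearestNeighbour_cvSign_mul_cvWalk (l : ℕ) :
    IsNearestNeighbour fun n ↦ cvSign X l * cvWalk X n :=
  (isNearestNeighbour_cvWalk hX).const_mul (abs_cvSign (hX 1 le_rfl) l)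

theorem cvSign_mul_cvWalk_nonneg_of_start {l n : ℕ} (hzero : cvWalk X (cvTau X l) = 0)
    (hfirst : cvWalk X (cvTau X l + 1) = cvSign X l) (hl : cvTau X l ≤ n)
    (hn : n ≤ cvTau X (l + 1)) : 0 ≤ cvSign X l * cvWalk X n := by
  refine (isNearestNeighbour_cvSign_mul_cvWalk hX l).nonneg_of_no_crossing ?_ ?_ ?_ hl hn
  · rw [hzero, mul_zero]
  · rw [hfirst]
    exact mul_self_nonneg _
  · intro i hi hi'
    rw [mul_mul_mul_comm]
    exact mul_nonneg (mul_self_nonneg _) (cvWalk_mul_nonneg_of_lt_cvTau_succ hi hi')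

variable (hinf : {i : ℕ | 1 ≤ i ∧ cvWalk X (i - 1) * cvWalk X (i + 1) < 0}.Infinite)
include hinf

theorem cvWalk_cvTau_and_cvWalk_cvTau_add_one (l : ℕ) :
    cvWalk X (cvTau X l) = 0 ∧ cvWalk X (cvTau X l + 1) = cvSign X l := by
  induction l with
  | zero => simp [cvTau, cvWalk, cvSign]
  | succ l ih =>
    obtain ⟨n, hn, hl, hcross⟩ := exists_cvTau_succ_eq hinf l
    have hsq := cvSign_mul_self (hX 1 le_rfl) l
    have hnonneg := cvSign_mul_cvWalk_nonneg_of_start hX ih.1 ih.2 hl (by omega)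
    have hcross' : cvSign X l * cvWalk X n * (cvSign X l * cvWalk X (n + 2)) < 0 := by
      rwa [mul_mul_mul_comm, hsq, one_mul]
    obtain ⟨hzero, hfirst⟩ :=
      (isNearestNeighbour_cvSign_mul_cvWalk hX l).eq_of_crossing hnonneg hcross'
    rw [hn, cvSign_succ]
    constructor
    · exact (mul_eq_zero_iff_left (left_ne_zero_of_mul_eq_one hsq)).mp hzero
    · linear_combination cvSign X l * hfirst - cvWalk X (n + 2) * hsq

theorem cvSign_mul_cvWalk_nonneg {l n : ℕ} (hl : cvTau X l ≤ n) (hn : n ≤ cvTau X (l + 1)) :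
    0 ≤ cvSign X l * cvWalk X n :=
  have ⟨hzero, hfirst⟩ := cvWalk_cvTau_and_cvWalk_cvTau_add_one hX hinf l
  cvSign_mul_cvWalk_nonneg_of_start hX hzero hfirst hl hn

theorem cvSbar_eq {l n : ℕ} (hl : cvTau X l ≤ n) (hn : n ≤ cvTau X (l + 1)) :
    cvSbar X n = cvSbar X (cvTau X l) + 1 - cvSign X l * cvWalk X (n + 1) := by
  rw [cvSbar_eq_sub hinf hl hn, (cvWalk_cvTau_and_cvWalk_cvTau_add_one hX hinf l).2]
  linear_combination cvSign_mul_self (hX 1 le_rfl) l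

theorem cvSign_mul_cvWalk_le_of_cvYbar_eq_zero {l k n : ℕ} (hY : cvYbar X n = 0)
    (hl : cvTau X l ≤ k) (hkn : k ≤ n) (hn : n ≤ cvTau X (l + 1)) :
    cvSign X l * cvWalk X (n + 1) ≤ cvSign X l * cvWalk X (k + 1) := by
  have hle := cvYof_eq_zero_iff.mp hY k hkn
  rw [cvSbar_eq hX hinf hl (hkn.trans hn), cvSbar_eq hX hinf (hl.trans hkn) hn] at hle
  omega

theorem cvSign_mul_cvWalk_eq_one_and_eq_zero {l n : ℕ} (hl : cvTau X l ≤ n)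
    (hn : n + 1 < cvTau X (l + 1)) (hY : cvYbar X n = 0) (hY' : cvYbar X (n + 1) = 0) :
    cvSign X l * cvWalk X (n + 1) = 1 ∧ cvSign X l * cvWalk X (n + 2) = 0 := by
  have hfirst : cvSign X l * cvWalk X (cvTau X l + 1) = 1 := by
    rw [(cvWalk_cvTau_and_cvWalk_cvTau_add_one hX hinf l).2, cvSign_mul_self (hX 1 le_rfl)]
  have hle_one := cvSign_mul_cvWalk_le_of_cvYbar_eq_zero hX hinf hY le_rfl hl (by omega)
  have hle : cvSign X l * cvWalk X (n + 2) ≤ cvSign X l * cvWalk X (n + 1) :=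
    cvSign_mul_cvWalk_le_of_cvYbar_eq_zero hX hinf hY' hl n.le_succ hn.le
  have hnonneg := cvSign_mul_cvWalk_nonneg hX hinf (by omega : cvTau X l ≤ n + 2) hn
  have hne : cvSign X l * cvWalk X (n + 2) ≠ cvSign X l * cvWalk X (n + 1) :=
    (isNearestNeighbour_cvSign_mul_cvWalk hX l).succ_ne (n + 1)
  omega

end Signs

theorem cv_first_zero_case_iii_general (X : ℕ → ℤ) (hX : ∀ j, 1 ≤ j → X j = 1 ∨ X j = -1)
    (hinf : {i : ℕ | 1 ≤ i ∧ cvWalk X (i - 1) * cvWalk X (i + 1) < 0}.Infinite)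
    (l p : ℕ) (hl : cvTau X l < p) (hp : p < cvTau X (l + 1))
    (hY : cvYbar X (p - 1) = 0) (hY' : cvYbar X p = 0) :
    (∀ k, cvTau X l < k → k ≤ p → cvWalk X k ≠ 0) ∧ cvWalk X (p + 1) = 0 := by
  obtain ⟨n, rfl⟩ := Nat.exists_eq_add_one_of_ne_zero hl.ne_bot
  rw [Nat.add_sub_cancel] at hY
  obtain ⟨hone, hzero⟩ :=
    cvSign_mul_cvWalk_eq_one_and_eq_zero hX hinf (Nat.le_of_lt_succ hl) hp hY hY'
  have hsign : cvSign X l ≠ 0 := left_ne_zero_of_mul_eq_one (cvSign_mul_self (hX 1 le_rfl) l)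
  refine ⟨fun k hlk hkn hk ↦ ?_, (mul_eq_zero_iff_left hsign).mp hzero⟩
  obtain ⟨j, rfl⟩ := Nat.exists_eq_add_one_of_ne_zero hlk.ne_bot
  have hle := cvSign_mul_cvWalk_le_of_cvYbar_eq_zero hX hinf hY (Nat.le_of_lt_succ hlk)
    (Nat.le_of_succ_le_succ hkn) (by omega)
  rw [hk, mul_zero, hone] at hle
  exact absurd hle (by decide)

/-- If `[p₁, q₁]` and `[p₂, q₂]` are two excursions of `Ȳ` contained in
`[τ l, τ (l+1)]` with `q₁ < p₂`, then `S k ≠ 0` for every `τ l < k ≤ p₂` and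
`S (p₂ + 1) = 0`; that is, the first zero of `S` after `τ l` is `p₂ + 1`. -/
theorem cv_first_zero_case_iii (X : ℕ → ℤ) (hX : ∀ j, 1 ≤ j → X j = 1 ∨ X j = -1)
    (hinf : {i : ℕ | 1 ≤ i ∧ cvWalk X (i - 1) * cvWalk X (i + 1) < 0}.Infinite)
    (l p₁ q₁ p₂ q₂ : ℕ)
    (hexc1 : cvIsExcursion X p₁ q₁) (hexc2 : cvIsExcursion X p₂ q₂)
    (hp1 : cvTau X l ≤ p₁) (hq2 : q₂ ≤ cvTau X (l + 1)) (horder : q₁ < p₂) :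
    (∀ k, cvTau X l < k → k ≤ p₂ → cvWalk X k ≠ 0) ∧ cvWalk X (p₂ + 1) = 0 :=
  cv_first_zero_case_iii_general X hX hinf l p₂ (hp1.trans_lt (hexc1.1.trans horder))
    (hexc2.1.trans_le hq2) hexc2.2.2.1 hexc2.2.1
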